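/- arXiv:1911.11402 — 2 statements merged into one kernel-verified Lean document; each statement's English description precedes it below -/
import Mathlib

section
/- Let 1/3 < λ < 1, let a : [0,1] → ℝ be Lipschitz continuous, let g ∈ C^λ₀([0,1];ℝ), and let f : ℝ² → ℝ be such that f, ∂₁f, ∂₂f and ∂₂²f exist and are continuous on ℝ². Define F(x,y) = ∫₀^y f(x,η) dη, so that ∂₁F(x,y) = ∫₀^y ∂₁f(x,η) dη. Then for every t ∈ [0,1] the Russo–Vallois symmetric integral ∫₀^t f(a_u,g_u) d°g_u exists and equals F(a_t,g_t) − F(a_0,g_0) − ∫₀^t ∂₁F(a_u,g_u) a'(u) du, where a' denotes the almost-everywhere defined derivative of the Lipschitz function a. -/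
open Filter Topology MeasureTheory Set

/-- The mean value formula in the first variable, with a jointly continuous difference quotient. -/
theorem exists_continuous_difference_quotient {F F₁ : ℝ → ℝ → ℝ}
    (hF : ∀ x y, HasDerivAt (fun x => F x y) (F₁ x y) x)
    (hF₁ : Continuous fun p : ℝ × ℝ => F₁ p.1 p.2) :
    ∃ Φ : ℝ × ℝ × ℝ → ℝ, Continuous Φ ∧ (∀ x y, Φ (x, x, y) = F₁ x y) ∧
      ∀ x x' y, F x' y - F x y = Φ (x, x', y) * (x' - x) := by
  refine ⟨fun p => ∫ s in (0:ℝ)..1, F₁ (p.1 + s * (p.2.1 - p.1)) p.2.2, ?_, ?_, ?_⟩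
  · apply intervalIntegral.continuous_parametric_intervalIntegral_of_continuous'
    exact hF₁.comp (f := fun q : (ℝ × ℝ × ℝ) × ℝ =>
      (q.1.1 + q.2 * (q.1.2.1 - q.1.1), q.1.2.2)) (by fun_prop)
  · intro x y
    simp
  · intro x x' y
    have hderiv : ∀ s ∈ uIcc (0:ℝ) 1, HasDerivAt (fun s : ℝ => F (x + s * (x' - x)) y)
        (F₁ (x + s * (x' - x)) y * (x' - x)) s := by
      intro s _
      have hline : HasDerivAt (fun s : ℝ => x + s * (x' - x)) (x' - x) s := by
        simpa using ((hasDerivAt_id s).mul_const (x' - x)).const_add x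
      exact (hF (x + s * (x' - x)) y).comp s hline
    have hcont : Continuous fun s : ℝ => F₁ (x + s * (x' - x)) y * (x' - x) :=
      (hF₁.comp (f := fun s : ℝ => (x + s * (x' - x), y)) (by fun_prop)).mul continuous_const
    have h := intervalIntegral.integral_eq_sub_of_hasDerivAt hderiv (hcont.intervalIntegrable 0 1)
    rw [intervalIntegral.integral_mul_const] at h
    simpa using h.symm

/-- Differentiation under an integral over a compact interval. -/
theorem hasDerivAt_integral_of_continuous_deriv {f f₁ : ℝ → ℝ → ℝ}
    (hf : ∀ x y, HasDerivAt (fun x => f x y) (f₁ x y) x)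
    (hfc : Continuous fun p : ℝ × ℝ => f p.1 p.2)
    (hf₁ : Continuous fun p : ℝ × ℝ => f₁ p.1 p.2) (x y : ℝ) :
    HasDerivAt (fun x => ∫ η in (0:ℝ)..y, f x η) (∫ η in (0:ℝ)..y, f₁ x η) x := by
  obtain ⟨B, hB⟩ := ((isCompact_closedBall x 1).prod (isCompact_uIcc (a := 0) (b := y))
    ).exists_bound_of_continuousOn hf₁.continuousOn
  have hsec : ∀ x, Continuous (f x) := fun x => hfc.comp (by fun_prop : Continuous fun η => (x, η))
  have hsec₁ : Continuous (f₁ x) := hf₁.comp (by fun_prop : Continuous fun η => (x, η))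
  refine (intervalIntegral.hasDerivAt_integral_of_dominated_loc_of_deriv_le (F' := f₁)
    (bound := fun _ => B) (Metric.closedBall_mem_nhds x one_pos)
    (Eventually.of_forall fun x => (hsec x).aestronglyMeasurable)
    ((hsec x).intervalIntegrable _ _) hsec₁.aestronglyMeasurable ?_
    intervalIntegrable_const ?_).2
  · exact Eventually.of_forall fun η hη x' hx' => hB (x', η) ⟨hx', uIoc_subset_uIcc hη⟩
  · exact Eventually.of_forall fun η _ x' _ => hf x' η

/-- An error bound for the trapezoidal rule with a single step. -/
theorem abs_integral_sub_trapezoid_le {h : ℝ → ℝ} (h1 : Differentiable ℝ h)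
    (h2 : Differentiable ℝ (deriv h)) {y z M : ℝ}
    (hM : ∀ η ∈ uIcc y z, |deriv (deriv h) η| ≤ M) :
    |(∫ η in y..z, h η) - (h z + h y) / 2 * (z - y)| ≤ M * |z - y| ^ 3 := by
  have hM0 : 0 ≤ M := (abs_nonneg _).trans (hM y left_mem_uIcc)
  have hdist : ∀ {w v}, w ∈ uIcc y z → v ∈ uIcc y z → |w - v| ≤ |z - y| := fun hw hv =>
    abs_sub_le_of_uIcc_subset_uIcc (uIcc_subset_uIcc hv hw)
  have hlip : ∀ w ∈ uIcc y z, ∀ v ∈ uIcc y z, |deriv h w - deriv h v| ≤ M * |z - y| := by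
    intro w hw v hv
    exact ((convex_uIcc y z).norm_image_sub_le_of_norm_deriv_le (fun η _ => h2 η) hM hv hw).trans
      (mul_le_mul_of_nonneg_left (hdist hw hv) hM0)
  have htaylor : ∀ w ∈ uIcc y z, |h w - h y - deriv h w * (w - y)| ≤ M * |z - y| * |z - y| := by
    intro w hw
    have hd : ∀ η ∈ uIcc y z,
        HasDerivWithinAt (fun η => h η - deriv h w * η) (deriv h η - deriv h w) (uIcc y z) η := by
      intro η _
      exact ((h1 η).hasDerivAt.sub
        (hasDerivAt_const_mul (deriv h w))).hasDerivWithinAt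
    have hle := (convex_uIcc y z).norm_image_sub_le_of_norm_hasDerivWithin_le hd
      (fun η hη => hlip η hη w hw) left_mem_uIcc hw
    rw [Real.norm_eq_abs, Real.norm_eq_abs] at hle
    calc |h w - h y - deriv h w * (w - y)|
        = |h w - deriv h w * w - (h y - deriv h w * y)| := by ring_nf
      _ ≤ M * |z - y| * |w - y| := hle
      _ ≤ _ := mul_le_mul_of_nonneg_left (hdist hw left_mem_uIcc) (by positivity)
  have hd : ∀ w ∈ uIcc y z, HasDerivWithinAt
      (fun w => (∫ η in y..w, h η) - (h w + h y) / 2 * (w - y))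
      ((h w - h y - deriv h w * (w - y)) / 2) (uIcc y z) w := by
    intro w _
    have e1 : HasDerivAt (fun w => ∫ η in y..w, h η) (h w) w :=
      h1.continuous.integral_hasStrictDerivAt y w |>.hasDerivAt
    have e2 := (((h1 w).hasDerivAt.add_const (h y)).div_const 2).mul
      ((hasDerivAt_id w).sub_const y)
    refine (e1.sub e2).hasDerivWithinAt.congr_deriv ?_
    simp only [id]
    ring
  have hle := (convex_uIcc y z).norm_image_sub_le_of_norm_hasDerivWithin_le hd
    (C := M * |z - y| * |z - y|) (fun w hw => by
      rw [Real.norm_eq_abs, abs_div, abs_two]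
      have := htaylor w hw
      have := abs_nonneg (h w - h y - deriv h w * (w - y))
      linarith) left_mem_uIcc right_mem_uIcc
  simp only [intervalIntegral.integral_same, sub_self, mul_zero, sub_zero, Real.norm_eq_abs] at hle
  exact hle.trans_eq (by ring)

theorem tendsto_integral_increment_div {H : ℝ → ℝ} (hH : Continuous H) (t : ℝ) :
    Tendsto (fun ε : ℝ => ∫ u in (0:ℝ)..t, (H (u + ε) - H u) / ε) (𝓝[>] 0) (𝓝 (H t - H 0)) := by
  have hP : ∀ x, HasDerivAt (fun x => ∫ u in (0:ℝ)..x, H u) (H x) x := fun x =>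
    (hH.integral_hasStrictDerivAt 0 x).hasDerivAt
  refine ((hP t).tendsto_slope_zero_right.sub (hP 0).tendsto_slope_zero_right).congr fun ε => ?_
  have hi : ∀ x y, IntervalIntegrable H volume x y := hH.intervalIntegrable
  have hshift : Continuous fun u => H (u + ε) := by fun_prop
  rw [intervalIntegral.integral_div, intervalIntegral.integral_sub
    (hshift.intervalIntegrable _ _) (hi _ _), intervalIntegral.integral_comp_add_right,
    ← intervalIntegral.integral_interval_sub_left (hi 0 (t + ε)) (hi 0 (0 + ε))]
  simp only [zero_add, intervalIntegral.integral_same, smul_eq_mul]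
  ring

/-- Averaged increments in the first variable, along a Lipschitz path, converge to the integral of
the corresponding partial derivative. -/
theorem tendsto_integral_partial_increment_div {F F₁ : ℝ → ℝ → ℝ}
    (hF : ∀ x y, HasDerivAt (fun x => F x y) (F₁ x y) x)
    (hF₁ : Continuous fun p : ℝ × ℝ => F₁ p.1 p.2) {A G : ℝ → ℝ} {K : NNReal}
    (hA : LipschitzWith K A) (hG : Continuous G) (t : ℝ) :
    Tendsto (fun ε : ℝ => ∫ u in (0:ℝ)..t, (F (A (u + ε)) (G (u + ε)) - F (A u) (G (u + ε))) / ε)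
      (𝓝[>] 0) (𝓝 (∫ u in (0:ℝ)..t, F₁ (A u) (G u) * deriv A u)) := by
  obtain ⟨Φ, hΦ, hdiag, hquot⟩ := exists_continuous_difference_quotient hF hF₁
  have hAc := hA.continuous
  have hΨ : Continuous fun p : ℝ × ℝ => Φ (A p.1, A (p.1 + p.2), G (p.1 + p.2)) := by fun_prop
  obtain ⟨B, hB⟩ := ((isCompact_uIcc (a := 0) (b := t)).prod (isCompact_Icc (a := (0:ℝ)) (b := 1))
    ).exists_bound_of_continuousOn hΨ.continuousOn
  have hint : ∀ ε u, (F (A (u + ε)) (G (u + ε)) - F (A u) (G (u + ε))) / ε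
      = Φ (A u, A (u + ε), G (u + ε)) * ((A (u + ε) - A u) / ε) := fun ε u => by
    rw [hquot, mul_div_assoc]
  simp only [hint]
  have hsmall : ∀ᶠ ε : ℝ in 𝓝[>] 0, ε ∈ Ioc (0:ℝ) 1 := Ioc_mem_nhdsGT one_pos
  refine intervalIntegral.tendsto_integral_filter_of_dominated_convergence (fun _ => B * K)
    ?_ ?_ intervalIntegrable_const ?_
  · refine Eventually.of_forall fun ε => Continuous.aestronglyMeasurable ?_
    fun_prop
  · filter_upwards [hsmall] with ε hε
    refine Eventually.of_forall fun u hu => ?_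
    have hb := hB (u, ε) ⟨uIoc_subset_uIcc hu, hε.1.le, hε.2⟩
    rw [norm_mul]
    refine mul_le_mul hb ?_ (norm_nonneg _) ((norm_nonneg _).trans hb)
    have hl := hA.dist_le_mul (u + ε) u
    rw [Real.dist_eq, Real.dist_eq, add_sub_cancel_left, abs_of_pos hε.1] at hl
    rwa [Real.norm_eq_abs, abs_div, abs_of_pos hε.1, div_le_iff₀ hε.1]
  · filter_upwards [hA.ae_differentiableAt_real] with u hu _
    rw [← hdiag]
    refine Tendsto.mul ?_ ?_
    · have hc : Continuous fun ε : ℝ => Φ (A u, A (u + ε), G (u + ε)) := by fun_prop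
      simpa using (hc.tendsto 0).mono_left nhdsWithin_le_nhds
    · refine hu.hasDerivAt.tendsto_slope_zero_right.congr fun ε => ?_
      rw [smul_eq_mul, div_eq_inv_mul]

theorem continuous_of_abs_sub_le_rpow {G : ℝ → ℝ} {C lam : ℝ} (hlam : 0 < lam)
    (hG : ∀ s t, |G t - G s| ≤ C * |t - s| ^ lam) : Continuous G := by
  refine continuous_iff_continuousAt.2 fun s => tendsto_iff_dist_tendsto_zero.2 ?_
  have hc : Continuous fun t : ℝ => C * |t - s| ^ lam :=
    continuous_const.mul ((by fun_prop : Continuous fun t : ℝ => |t - s|).rpow_const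
      fun _ => Or.inr hlam.le)
  refine squeeze_zero (fun _ => dist_nonneg) (fun t => hG s t) ?_
  simpa [Real.zero_rpow hlam.ne'] using hc.tendsto s

/-- If the integrands are uniformly small then so are the integrals. -/
theorem tendsto_intervalIntegral_zero_of_norm_le {r : ℝ → ℝ → ℝ} {b : ℝ → ℝ} {t : ℝ} {l : Filter ℝ}
    (hr : ∀ᶠ ε in l, ∀ u ∈ uIoc 0 t, ‖r ε u‖ ≤ b ε) (hb : Tendsto b l (𝓝 0)) :
    Tendsto (fun ε => ∫ u in (0:ℝ)..t, r ε u) l (𝓝 0) := by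
  refine squeeze_zero_norm' (hr.mono fun ε hε =>
    intervalIntegral.norm_integral_le_of_norm_le_const hε) ?_
  simpa using hb.mul_const |t - 0|

/-- The chain rule for symmetric integrals along paths defined on the whole line. -/
theorem tendsto_symmetric_integral {lam : ℝ} (hlam : 1 / 3 < lam)
    {A G : ℝ → ℝ} {K : NNReal} {C : ℝ} (hA : LipschitzWith K A)
    (hG : ∀ s t, |G t - G s| ≤ C * |t - s| ^ lam)
    {f : ℝ → ℝ → ℝ}
    (hfd1 : ∀ y : ℝ, Differentiable ℝ (fun x => f x y))
    (hfd2 : ∀ x : ℝ, Differentiable ℝ (f x))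
    (hfd22 : ∀ x : ℝ, Differentiable ℝ (deriv (f x)))
    (hfc : Continuous fun p : ℝ × ℝ => f p.1 p.2)
    (hfc1 : Continuous fun p : ℝ × ℝ => deriv (fun x => f x p.2) p.1)
    (hfc22 : Continuous fun p : ℝ × ℝ => deriv (deriv (f p.1)) p.2) (t : ℝ) :
    Tendsto (fun ε : ℝ => ∫ u in (0:ℝ)..t,
        (f (A (u + ε)) (G (u + ε)) + f (A u) (G u)) / 2 * ((G (u + ε) - G u) / ε))
      (𝓝[>] 0)
      (𝓝 ((∫ η in (0:ℝ)..(G t), f (A t) η) - (∫ η in (0:ℝ)..(G 0), f (A 0) η)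
          - ∫ u in (0:ℝ)..t,
              (∫ η in (0:ℝ)..(G u), deriv (fun x => f x η) (A u)) * deriv A u)) := by
  have hlam0 : 0 < lam := by linarith
  have hAc := hA.continuous
  have hGc := continuous_of_abs_sub_le_rpow hlam0 hG
  have hC : 0 ≤ C := by simpa using (abs_nonneg _).trans (hG 0 1)
  have hsec : ∀ x, Continuous (f x) := fun x => (hfd2 x).continuous
  set F : ℝ → ℝ → ℝ := fun x y => ∫ η in (0:ℝ)..y, f x η
  have hFc : Continuous fun p : ℝ × ℝ => F p.1 p.2 :=
    intervalIntegral.continuous_parametric_intervalIntegral_of_continuous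
      (f := fun (p : ℝ × ℝ) η => f p.1 η)
      (hfc.comp (f := fun q : (ℝ × ℝ) × ℝ => (q.1.1, q.2)) (by fun_prop)) continuous_snd
  have hF₁c : Continuous fun p : ℝ × ℝ => ∫ η in (0:ℝ)..p.2, deriv (fun x => f x η) p.1 :=
    intervalIntegral.continuous_parametric_intervalIntegral_of_continuous
      (f := fun (p : ℝ × ℝ) η => deriv (fun x => f x η) p.1)
      (hfc1.comp (f := fun q : (ℝ × ℝ) × ℝ => (q.1.1, q.2)) (by fun_prop)) continuous_snd
  have hfd : ∀ x y, HasDerivAt (fun x => f x y) (deriv (fun x => f x y) x) x :=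
    fun x y => (hfd1 y x).hasDerivAt
  have hFd : ∀ x y, HasDerivAt (fun x => F x y) (∫ η in (0:ℝ)..y, deriv (fun x => f x η) x) x :=
    hasDerivAt_integral_of_continuous_deriv hfd hfc hfc1
  have hHc : Continuous fun u => F (A u) (G u) :=
    hFc.comp (f := fun u => (A u, G u)) (by fun_prop)
  have hFac : ∀ ε, Continuous fun u => F (A u) (G (u + ε)) := fun ε =>
    hFc.comp (f := fun u => (A u, G (u + ε))) (by fun_prop)
  have hfAG : Continuous fun u => f (A u) (G u) :=
    hfc.comp (f := fun u => (A u, G u)) (by fun_prop)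
  have hmain := (tendsto_integral_increment_div hHc t).sub
    (tendsto_integral_partial_increment_div hFd hF₁c hA hGc t)
  set r : ℝ → ℝ → ℝ := fun ε u =>
    (f (A (u + ε)) (G (u + ε)) + f (A u) (G u)) / 2 * ((G (u + ε) - G u) / ε)
      - ((F (A (u + ε)) (G (u + ε)) - F (A u) (G u)) / ε
        - (F (A (u + ε)) (G (u + ε)) - F (A u) (G (u + ε))) / ε) with hrdef
  obtain ⟨Φ, hΦ, -, hquot⟩ := exists_continuous_difference_quotient hfd hfc1
  have hΨ : Continuous fun p : ℝ × ℝ => Φ (A p.1, A (p.1 + p.2), G (p.1 + p.2)) := by fun_prop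
  obtain ⟨B, hB⟩ := ((isCompact_uIcc (a := 0) (b := t)).prod (isCompact_Icc (a := (0:ℝ)) (b := 1))
    ).exists_bound_of_continuousOn hΨ.continuousOn
  obtain ⟨M, hM⟩ : ∃ M, ∀ u ∈ uIcc 0 t, ∀ ε ∈ Icc (0:ℝ) 1, ∀ η ∈ uIcc (G u) (G (u + ε)),
      |deriv (deriv (f (A u))) η| ≤ M := by
    have hc : Continuous fun q : ℝ × ℝ × ℝ =>
        deriv (deriv (f (A q.1))) (G q.1 + q.2.2 * (G (q.1 + q.2.1) - G q.1)) :=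
      hfc22.comp (f := fun q : ℝ × ℝ × ℝ =>
        (A q.1, G q.1 + q.2.2 * (G (q.1 + q.2.1) - G q.1))) (by fun_prop)
    obtain ⟨M, hM⟩ := ((isCompact_uIcc (a := 0) (b := t)).prod
      ((isCompact_Icc (a := (0:ℝ)) (b := 1)).prod (isCompact_Icc (a := (0:ℝ)) (b := 1)))
      ).exists_bound_of_continuousOn hc.continuousOn
    refine ⟨M, fun u hu ε hε η hη => ?_⟩
    rw [← segment_eq_uIcc, segment_eq_image'] at hη
    obtain ⟨θ, hθ, rfl⟩ := hη
    exact hM (u, ε, θ) ⟨hu, hε, hθ⟩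
  have hbound : ∀ ε ∈ Ioc (0:ℝ) 1, ∀ u ∈ uIoc 0 t,
      ‖r ε u‖ ≤ B * K * C * ε ^ lam + M * C ^ 3 * ε ^ (3 * lam - 1) := by
    intro ε hε u hu
    have hu' := uIoc_subset_uIcc hu
    have hε' : ε ∈ Icc (0:ℝ) 1 := ⟨hε.1.le, hε.2⟩
    have hΔG : |G (u + ε) - G u| ≤ C * ε ^ lam := by
      simpa [abs_of_pos hε.1] using hG u (u + ε)
    have hΔA : |A (u + ε) - A u| ≤ K * ε := by
      simpa [Real.dist_eq, abs_of_pos hε.1] using hA.dist_le_mul (u + ε) u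
    have hM0 : 0 ≤ M := (abs_nonneg _).trans (hM u hu' ε hε' _ left_mem_uIcc)
    have hBu : |Φ (A u, A (u + ε), G (u + ε))| ≤ B := hB (u, ε) ⟨hu', hε'⟩
    have hB0 : 0 ≤ B := (abs_nonneg _).trans hBu
    have htrap := abs_integral_sub_trapezoid_le (hfd2 (A u)) (hfd22 (A u)) (hM u hu' ε hε')
    rw [← intervalIntegral.integral_interval_sub_left ((hsec (A u)).intervalIntegrable 0 _)
      ((hsec (A u)).intervalIntegrable 0 _)] at htrap
    have hrε : r ε u = (Φ (A u, A (u + ε), G (u + ε)) * (A (u + ε) - A u) / 2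
        * (G (u + ε) - G u) - (F (A u) (G (u + ε)) - F (A u) (G u)
          - (f (A u) (G (u + ε)) + f (A u) (G u)) / 2 * (G (u + ε) - G u))) / ε := by
      rw [← hquot]
      simp only [hrdef]
      ring
    have hfirst : |Φ (A u, A (u + ε), G (u + ε)) * (A (u + ε) - A u) / 2 * (G (u + ε) - G u)|
        ≤ B * (K * ε) * (C * ε ^ lam) := by
      rw [abs_mul, abs_div, abs_mul, abs_two]
      have hBK : |Φ (A u, A (u + ε), G (u + ε))| * |A (u + ε) - A u| ≤ B * (K * ε) := by gcongr
      have hnn : 0 ≤ |Φ (A u, A (u + ε), G (u + ε))| * |A (u + ε) - A u| := by positivity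
      exact mul_le_mul (by linarith) hΔG (abs_nonneg _) (by linarith)
    have hsecond : M * |G (u + ε) - G u| ^ 3 ≤ M * (C * ε ^ lam) ^ 3 := by gcongr
    have hpow : (ε ^ lam) ^ 3 = ε ^ (3 * lam - 1) * ε := by
      rw [← Real.rpow_natCast, ← Real.rpow_mul hε.1.le, ← Real.rpow_add_one hε.1.ne']
      congr 1
      push_cast
      ring
    rw [hrε, Real.norm_eq_abs, abs_div, abs_of_pos hε.1, div_le_iff₀ hε.1]
    calc _ ≤ B * (K * ε) * (C * ε ^ lam) + M * (C * ε ^ lam) ^ 3 :=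
          (abs_sub _ _).trans (add_le_add hfirst (htrap.trans hsecond))
      _ = _ := by
          rw [mul_pow, hpow]
          ring
  have hr : Tendsto (fun ε => ∫ u in (0:ℝ)..t, r ε u) (𝓝[>] 0) (𝓝 0) := by
    refine tendsto_intervalIntegral_zero_of_norm_le
      (b := fun ε => B * K * C * ε ^ lam + M * C ^ 3 * ε ^ (3 * lam - 1)) ?_ ?_
    · filter_upwards [Ioc_mem_nhdsGT (one_pos : (0:ℝ) < 1)] with ε hε using hbound ε hε
    · have h3 : 0 < 3 * lam - 1 := by linarith
      have hc : Continuous fun ε : ℝ => B * K * C * ε ^ lam + M * C ^ 3 * ε ^ (3 * lam - 1) :=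
        (continuous_const.mul (Real.continuous_rpow_const hlam0.le)).add
          (continuous_const.mul (Real.continuous_rpow_const h3.le))
      simpa [Real.zero_rpow hlam0.ne', Real.zero_rpow h3.ne'] using
        (hc.tendsto 0).mono_left nhdsWithin_le_nhds
  have hsum := hr.add hmain
  rw [zero_add] at hsum
  refine hsum.congr fun ε => ?_
  have hshift : Continuous fun u => F (A (u + ε)) (G (u + ε)) :=
    hHc.comp (f := fun u => u + ε) (by fun_prop)
  have hfshift : Continuous fun u => f (A (u + ε)) (G (u + ε)) :=
    hfAG.comp (f := fun u => u + ε) (by fun_prop)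
  have hFac := hFac ε
  have hi1 : Continuous fun u => (F (A (u + ε)) (G (u + ε)) - F (A u) (G u)) / ε := by fun_prop
  have hi2 : Continuous fun u => (F (A (u + ε)) (G (u + ε)) - F (A u) (G (u + ε))) / ε := by
    fun_prop
  have hi12 : Continuous fun u => (F (A (u + ε)) (G (u + ε)) - F (A u) (G u)) / ε
      - (F (A (u + ε)) (G (u + ε)) - F (A u) (G (u + ε))) / ε := hi1.sub hi2
  have hi3 : Continuous (r ε) := by fun_prop
  rw [← intervalIntegral.integral_sub (hi1.intervalIntegrable _ _) (hi2.intervalIntegrable _ _),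
    ← intervalIntegral.integral_add (hi3.intervalIntegrable _ _)
      (hi12.intervalIntegrable _ _)]
  refine intervalIntegral.integral_congr fun u _ => ?_
  simp only [hrdef]
  ring

theorem abs_clamp_sub_clamp_le (t u v : ℝ) :
    |max 0 (min u t) - max 0 (min v t)| ≤ |u - v| := by
  have h1 := abs_max_sub_max_le_max 0 (min u t) 0 (min v t)
  have h2 := abs_min_sub_min_le_max u t v t
  simp only [sub_self, abs_zero, abs_nonneg, sup_of_le_right, sup_of_le_left] at h1 h2
  exact h1.trans h2


/-- The Russo–Vallois symmetric integral `∫₀ᵗ f dᵒg = I`. -/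
def HasSymmInt (f g : ℝ → ℝ) (t : ℝ) (I : ℝ) : Prop :=
  Filter.Tendsto
    (fun ε : ℝ =>
      ∫ u in (0:ℝ)..t, ((f (min (u + ε) t) + f u) / 2) * ((g (min (u + ε) t) - g u) / ε))
    (nhdsWithin 0 (Set.Ioi 0)) (nhds I)

theorem stmt1
    (lam : ℝ) (hlam1 : 1/3 < lam) (hlam2 : lam < 1)
    (a : ℝ → ℝ) (K : NNReal) (ha : LipschitzOnWith K a (Set.Icc 0 1))
    (g : ℝ → ℝ) (Cg : ℝ)
    (hg : ∀ s ∈ Set.Icc (0:ℝ) 1, ∀ t ∈ Set.Icc (0:ℝ) 1, |g t - g s| ≤ Cg * |t - s| ^ lam)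
    (hg0 : g 0 = 0)
    (f : ℝ → ℝ → ℝ)
    (hfd1 : ∀ y : ℝ, Differentiable ℝ (fun x => f x y))
    (hfd2 : ∀ x : ℝ, Differentiable ℝ (f x))
    (hfd22 : ∀ x : ℝ, Differentiable ℝ (deriv (f x)))
    (hfc : Continuous fun p : ℝ × ℝ => f p.1 p.2)
    (hfc1 : Continuous fun p : ℝ × ℝ => deriv (fun x => f x p.2) p.1)
    (hfc2 : Continuous fun p : ℝ × ℝ => deriv (f p.1) p.2)
    (hfc22 : Continuous fun p : ℝ × ℝ => deriv (deriv (f p.1)) p.2) :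
    ∀ t ∈ Set.Icc (0:ℝ) 1,
      HasSymmInt (fun u => f (a u) (g u)) g t
        ((∫ η in (0:ℝ)..(g t), f (a t) η) - (∫ η in (0:ℝ)..(g 0), f (a 0) η)
          - ∫ u in (0:ℝ)..t,
              (∫ η in (0:ℝ)..(g u), deriv (fun x => f x η) (a u)) * deriv a u) := by
  intro t ht
  have hclamp : ∀ u, max 0 (min u t) ∈ Icc (0:ℝ) 1 := fun u =>
    ⟨le_max_left _ _, max_le zero_le_one ((min_le_right _ _).trans ht.2)⟩
  have hfix : ∀ u ∈ Icc 0 t, max 0 (min u t) = u := fun u hu => by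
    rw [min_eq_left hu.2, max_eq_right hu.1]
  have hC : 0 ≤ Cg := by
    simpa using (abs_nonneg _).trans (hg 0 (left_mem_Icc.2 zero_le_one) 1
      (right_mem_Icc.2 zero_le_one))
  have hA : LipschitzWith K fun u => a (max 0 (min u t)) :=
    LipschitzWith.of_dist_le_mul fun u v =>
      (ha.dist_le_mul _ (hclamp u) _ (hclamp v)).trans
        (mul_le_mul_of_nonneg_left (abs_clamp_sub_clamp_le t u v) K.2)
  have hG : ∀ s u, |g (max 0 (min u t)) - g (max 0 (min s t))| ≤ Cg * |u - s| ^ lam := fun s u =>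
    (hg _ (hclamp s) _ (hclamp u)).trans (mul_le_mul_of_nonneg_left
      (Real.rpow_le_rpow (abs_nonneg _) (abs_clamp_sub_clamp_le t u s) (by linarith)) hC)
  have h := tendsto_symmetric_integral hlam1 hA hG hfd1 hfd2 hfd22 hfc hfc1 hfc22 t
  simp only [hfix t ⟨ht.1, le_rfl⟩, hfix 0 ⟨le_rfl, ht.1⟩] at h
  have hdrift : (∫ u in (0:ℝ)..t,
      (∫ η in (0:ℝ)..(g (max 0 (min u t))), deriv (fun x => f x η) (a (max 0 (min u t))))
        * deriv (fun u => a (max 0 (min u t))) u)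
      = ∫ u in (0:ℝ)..t,
        (∫ η in (0:ℝ)..(g u), deriv (fun x => f x η) (a u)) * deriv a u := by
    refine intervalIntegral.integral_congr_Ioo_of_le ht.1 fun u hu => ?_
    have hd : (fun u => a (max 0 (min u t))) =ᶠ[𝓝 u] a := by
      filter_upwards [Icc_mem_nhds hu.1 hu.2] with v hv
      rw [hfix v hv]
    simp only [hfix u ⟨hu.1.le, hu.2.le⟩, hd.deriv_eq]
  rw [hdrift] at h
  refine h.congr' ?_
  filter_upwards [self_mem_nhdsWithin] with ε hε
  refine intervalIntegral.integral_congr fun u hu => ?_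
  rw [uIcc_of_le ht.1] at hu
  have hshift : max 0 (min (u + ε) t) = min (u + ε) t :=
    max_eq_right (le_min (add_nonneg hu.1 (le_of_lt hε)) ht.1)
  simp only [hfix u hu, hshift]
end

section
/- Let 1/3 < λ < 1, let a : [0,1] → ℝ be Lipschitz continuous, let g ∈ C^λ₀([0,1];ℝ), and let f : ℝ² → ℝ be such that f, ∂₁f, ∂₂f and ∂₂²f exist, are continuous and bounded on ℝ². Then there exists a constant C, depending only on f, λ, the λ-Hölder constant of g and the Lipschitz constant of a, such that for all 0 ≤ s < t ≤ 1: |∫_s^t f(a_u,g_u) d°g_u − ((f(a_s,g_s) + f(a_t,g_t))/2)·(g_t − g_s)| ≤ C·(t−s)^{min(1+λ, 3λ)}, where ∫_s^t f(a_u,g_u) d°g_u denotes the Russo–Vallois symmetric integral over [s,t] (which exists). -/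
/-- The Russo–Vallois symmetric integral `∫ₛᵗ f dᵒg = I` over the interval `[s,t]`. -/
def HasSymmIntOn (f g : ℝ → ℝ) (s t : ℝ) (I : ℝ) : Prop :=
  Filter.Tendsto
    (fun ε : ℝ =>
      ∫ u in s..t, ((f (min (u + ε) t) + f u) / 2) * ((g (min (u + ε) t) - g u) / ε))
    (nhdsWithin 0 (Set.Ioi 0)) (nhds I)

open Filter Topology MeasureTheory Set
open scoped NNReal Interval

theorem abs_sub_le_of_abs_deriv_le {φ : ℝ → ℝ} {M : ℝ} (hφ : Differentiable ℝ φ)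
    (hM : ∀ x, |deriv φ x| ≤ M) (x y : ℝ) : |φ y - φ x| ≤ M * |y - x| :=
  convex_univ.norm_image_sub_le_of_norm_deriv_le (fun z _ => hφ z) (fun z _ => hM z)
    (mem_univ x) (mem_univ y)

/-- Error bound for the trapezoidal rule with a single panel. -/
theorem abs_integral_sub_trapezoid_le_s3 {φ : ℝ → ℝ} {M : ℝ} (hφ : Differentiable ℝ φ)
    (hφ' : Differentiable ℝ (deriv φ)) (hM : ∀ x, |deriv (deriv φ) x| ≤ M) (p q : ℝ) :
    |(∫ w in p..q, φ w) - (φ p + φ q) / 2 * (q - p)| ≤ M * |q - p| ^ 3 := by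
  have hM0 : 0 ≤ M := (abs_nonneg _).trans (hM 0)
  have slope_error : ∀ x, |φ x - φ p - deriv φ x * (x - p)| ≤ M * |x - p| ^ 2 := by
    intro x
    have key := (convex_uIcc p x).norm_image_sub_le_of_norm_hasDerivWithin_le
      (f := fun z => φ z - deriv φ x * z) (f' := fun z => deriv φ z - deriv φ x)
      (C := M * |x - p|) (x := p) (y := x)
      (fun z _ => by
        have h := (hφ z).hasDerivAt.fun_sub ((hasDerivAt_id z).const_mul (deriv φ x))
        simpa using h.hasDerivWithinAt)
      (fun z hz => by
        refine (abs_sub_le_of_abs_deriv_le hφ' hM x z).trans ?_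
        have : |z - x| ≤ |x - p| := by
          rw [abs_sub_comm z x]; exact abs_sub_right_of_mem_uIcc hz
        gcongr)
      left_mem_uIcc right_mem_uIcc
    simp only [Real.norm_eq_abs] at key
    calc _ = |φ x - deriv φ x * x - (φ p - deriv φ x * p)| := by ring_nf
      _ ≤ _ := key
      _ = _ := by ring
  have key := (convex_uIcc p q).norm_image_sub_le_of_norm_hasDerivWithin_le
    (f := fun x => (∫ w in p..x, φ w) - (φ p + φ x) / 2 * (x - p))
    (f' := fun x => (φ x - φ p - deriv φ x * (x - p)) / 2)
    (C := M * |q - p| ^ 2) (x := p) (y := q)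
    (fun x _ => by
      have h1 := hφ.continuous.integral_hasStrictDerivAt p x
      have h2 := (((hφ x).hasDerivAt.const_add (φ p)).div_const 2).fun_mul
        ((hasDerivAt_id' x).sub_const p)
      convert (h1.hasDerivAt.fun_sub h2).hasDerivWithinAt using 1
      ring)
    (fun x hx => by
      have h1 : |x - p| ≤ |q - p| := abs_sub_left_of_mem_uIcc hx
      have h2 := slope_error x
      have h3 : M * |x - p| ^ 2 ≤ M * |q - p| ^ 2 := by gcongr
      rw [Real.norm_eq_abs, abs_div, abs_two]
      have := abs_nonneg (φ x - φ p - deriv φ x * (x - p))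
      linarith)
    left_mem_uIcc right_mem_uIcc
  simp only [Real.norm_eq_abs, intervalIntegral.integral_same, sub_self, mul_zero, sub_zero] at key
  calc _ ≤ _ := key
    _ = _ := by ring

theorem abs_integral_sub_mixed_trapezoid_le {f : ℝ → ℝ → ℝ} {M₁ M₂ : ℝ}
    (hfd1 : ∀ y : ℝ, Differentiable ℝ (fun x => f x y))
    (hfd2 : ∀ x : ℝ, Differentiable ℝ (f x))
    (hfd22 : ∀ x : ℝ, Differentiable ℝ (deriv (f x)))
    (hbd1 : ∀ x y : ℝ, |deriv (fun x' => f x' y) x| ≤ M₁)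
    (hbd22 : ∀ x y : ℝ, |deriv (deriv (f x)) y| ≤ M₂) (x x' y y' : ℝ) :
    |(f x' y' + f x y) / 2 * (y' - y) - ∫ w in y..y', f x w|
      ≤ M₂ * |y' - y| ^ 3 + M₁ * |x' - x| * |y' - y| := by
  have h1 := abs_integral_sub_trapezoid_le_s3 (hfd2 x) (hfd22 x) (hbd22 x) y y'
  have h2 := abs_sub_le_of_abs_deriv_le (hfd1 y') (fun z => hbd1 z y') x x'
  have h3 : |(f x' y' - f x y') / 2 * (y' - y)| ≤ M₁ * |x' - x| * |y' - y| := by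
    rw [abs_mul, abs_div, abs_two]
    gcongr
    have := abs_nonneg (f x' y' - f x y')
    linarith
  calc _ = |-((∫ w in y..y', f x w) - (f x y + f x y') / 2 * (y' - y))
        + (f x' y' - f x y') / 2 * (y' - y)| := by ring_nf
    _ ≤ _ := abs_add_le _ _
    _ ≤ _ := by rw [abs_neg]; exact add_le_add h1 h3

theorem abs_integral_sub_integral_le {f : ℝ → ℝ → ℝ} {M : ℝ}
    (hfc : Continuous fun p : ℝ × ℝ => f p.1 p.2)
    (hfd1 : ∀ y : ℝ, Differentiable ℝ (fun x => f x y))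
    (hbd1 : ∀ x y : ℝ, |deriv (fun x' => f x' y) x| ≤ M) (x x' y y' : ℝ) :
    |(∫ w in y..y', f x' w) - ∫ w in y..y', f x w| ≤ M * |x' - x| * |y' - y| := by
  have hc : ∀ z, Continuous (f z) := fun z => hfc.comp (Continuous.prodMk_right z)
  rw [← intervalIntegral.integral_sub ((hc x').intervalIntegrable _ _)
    ((hc x).intervalIntegrable _ _), ← Real.norm_eq_abs]
  refine intervalIntegral.norm_integral_le_of_norm_le_const fun w _ => ?_
  exact abs_sub_le_of_abs_deriv_le (hfd1 w) (fun z => hbd1 z w) x x'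

theorem differentiable_integral_left {f : ℝ → ℝ → ℝ} {M : ℝ}
    (hfc : Continuous fun p : ℝ × ℝ => f p.1 p.2)
    (hfd1 : ∀ y : ℝ, Differentiable ℝ (fun x => f x y))
    (hfc1 : Continuous fun p : ℝ × ℝ => deriv (fun x => f x p.2) p.1)
    (hbd1 : ∀ x y : ℝ, |deriv (fun x' => f x' y) x| ≤ M) (y y' : ℝ) :
    Differentiable ℝ (fun x => ∫ w in y..y', f x w) := by
  have hc : ∀ z, Continuous (f z) := fun z => hfc.comp (Continuous.prodMk_right z)
  intro x
  exact (intervalIntegral.hasDerivAt_integral_of_dominated_loc_of_deriv_le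
    (F := f) (F' := fun z w => deriv (fun x' => f x' w) z) (bound := fun _ => M) univ_mem
    (Eventually.of_forall fun z => (hc z).aestronglyMeasurable)
    ((hc x).intervalIntegrable _ _)
    (hfc1.comp (Continuous.prodMk_right x)).aestronglyMeasurable
    (Eventually.of_forall fun w _ z _ => hbd1 z w)
    intervalIntegrable_const
    (Eventually.of_forall fun w _ z _ => (hfd1 w z).hasDerivAt)).2.differentiableAt

theorem tendsto_integral_diff_quotient {H : ℝ → ℝ} (hH : Continuous H) (s t : ℝ) :
    Tendsto (fun ε : ℝ => ∫ u in s..t, (H (u + ε) - H u) / ε) (𝓝[>] 0) (𝓝 (H t - H s)) := by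
  have hi : ∀ p q, IntervalIntegrable H volume p q := fun p q => hH.intervalIntegrable p q
  have hd : ∀ x, Tendsto (fun ε : ℝ => ε⁻¹ • ((∫ u in s..x + ε, H u) - ∫ u in s..x, H u))
      (𝓝[>] 0) (𝓝 (H x)) := fun x =>
    (hH.integral_hasStrictDerivAt s x).hasDerivAt.tendsto_slope_zero_right
  refine ((hd t).sub (hd s)).congr fun ε => ?_
  have hshift : IntervalIntegrable (fun u => H (u + ε)) volume s t :=
    (hH.comp (continuous_add_const ε)).intervalIntegrable _ _
  rw [intervalIntegral.integral_div, intervalIntegral.integral_sub hshift (hi s t),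
    intervalIntegral.integral_comp_add_right,
    ← intervalIntegral.integral_interval_sub_left (hi s (t + ε)) (hi s (s + ε)),
    intervalIntegral.integral_same]
  simp only [smul_eq_mul]
  ring

section Extended

variable {f : ℝ → ℝ → ℝ} {g a : ℝ → ℝ} {M₁ M₂ Cg lam s t : ℝ} {K : ℝ≥0}

theorem continuous_of_abs_sub_le_rpow_s3 (hlam : 0 < lam)
    (hg : ∀ u v, |g v - g u| ≤ Cg * |v - u| ^ lam) : Continuous g := by
  rw [continuous_iff_continuousAt]
  intro u
  rw [ContinuousAt, tendsto_iff_dist_tendsto_zero]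
  refine squeeze_zero (fun _ => dist_nonneg) (fun v => hg u v) ?_
  have : Continuous fun v : ℝ => Cg * |v - u| ^ lam :=
    continuous_const.mul ((by fun_prop : Continuous fun v : ℝ => |v - u|).rpow_const
      fun _ => Or.inr hlam.le)
  simpa [Real.zero_rpow hlam.ne'] using this.tendsto u

/-- The contribution of the first argument to the increments of `u ↦ ∫ w in g t..g u, f (a u) w`
has a limit, of the order `(t - s) ^ (1 + lam)`. -/
theorem exists_tendsto_integral_left_increment
    (hfc : Continuous fun p : ℝ × ℝ => f p.1 p.2)
    (hfd1 : ∀ y : ℝ, Differentiable ℝ (fun x => f x y))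
    (hfc1 : Continuous fun p : ℝ × ℝ => deriv (fun x => f x p.2) p.1)
    (hbd1 : ∀ x y : ℝ, |deriv (fun x' => f x' y) x| ≤ M₁)
    (hlam : 0 < lam) (hCg : 0 ≤ Cg) (hg : ∀ u v, |g v - g u| ≤ Cg * |v - u| ^ lam)
    (ha : LipschitzWith K a) (hst : s < t) (hgt : ∀ u, t ≤ u → g u = g t) :
    ∃ J : ℝ, Tendsto (fun ε : ℝ => ∫ u in s..t,
        ((∫ w in g t..g (u + ε), f (a (u + ε)) w) - ∫ w in g t..g (u + ε), f (a u) w) / ε)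
        (𝓝[>] 0) (𝓝 J) ∧ |J| ≤ M₁ * K * Cg * (t - s) ^ (1 + lam) := by
  have hM0 : 0 ≤ M₁ := (abs_nonneg _).trans (hbd1 0 0)
  have hgc : Continuous g := continuous_of_abs_sub_le_rpow_s3 hlam hg
  have hac : Continuous a := ha.continuous
  have hF : Continuous fun p : ℝ × ℝ => ∫ w in g t..p.2, f p.1 w :=
    intervalIntegral.continuous_parametric_primitive_of_continuous hfc
  have hlip : ∀ u ε : ℝ, 0 < ε → |a (u + ε) - a u| ≤ K * ε := fun u ε hε => by
    simpa [Real.dist_eq, abs_of_pos hε] using ha.dist_le_mul (u + ε) u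
  have hdist : ∀ u ε : ℝ, s ≤ u → 0 < ε → |g (u + ε) - g t| ≤ Cg * (t - s) ^ lam := by
    intro u ε hu hε
    rcases le_total t (u + ε) with h | h
    · rw [hgt _ h, sub_self, abs_zero]
      have := sub_nonneg.2 hst.le
      positivity
    · refine (hg t (u + ε)).trans ?_
      rw [abs_sub_comm, abs_of_nonneg (by linarith)]
      gcongr
      linarith
  have hbound : ∀ u ε : ℝ, s ≤ u → 0 < ε →
      |((∫ w in g t..g (u + ε), f (a (u + ε)) w) - ∫ w in g t..g (u + ε), f (a u) w) / ε|
        ≤ M₁ * K * (Cg * (t - s) ^ lam) := by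
    intro u ε hu hε
    rw [abs_div, abs_of_pos hε, div_le_iff₀ hε]
    calc _ ≤ M₁ * |a (u + ε) - a u| * |g (u + ε) - g t| :=
          abs_integral_sub_integral_le hfc hfd1 hbd1 _ _ _ _
      _ ≤ M₁ * (K * ε) * (Cg * (t - s) ^ lam) := by
          gcongr
          · exact hlip u ε hε
          · exact hdist u ε hu hε
      _ = _ := by ring
  have htend : Tendsto (fun ε : ℝ => ∫ u in s..t,
        ((∫ w in g t..g (u + ε), f (a (u + ε)) w) - ∫ w in g t..g (u + ε), f (a u) w) / ε)
        (𝓝[>] 0) (𝓝 (∫ u in s..t, deriv (fun v => ∫ w in g t..g u, f (a v) w) u)) := by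
    refine intervalIntegral.tendsto_integral_filter_of_dominated_convergence
      (fun _ => M₁ * K * (Cg * (t - s) ^ lam)) (Eventually.of_forall fun ε => ?_) ?_
      intervalIntegrable_const ?_
    · refine Continuous.aestronglyMeasurable (Continuous.div_const (Continuous.sub ?_ ?_) _)
      · exact hF.comp₂ (by fun_prop : Continuous fun u => a (u + ε)) (by fun_prop)
      · exact hF.comp₂ hac (by fun_prop : Continuous fun u => g (u + ε))
    · filter_upwards [self_mem_nhdsWithin] with ε hε
      refine Eventually.of_forall fun u hu => hbound u ε ?_ hε
      rw [uIoc_of_le hst.le] at hu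
      exact hu.1.le
    · filter_upwards [ha.ae_differentiableAt_real] with u hu _
      have hd : DifferentiableAt ℝ (fun v => ∫ w in g t..g u, f (a v) w) u :=
        (differentiable_integral_left hfc hfd1 hfc1 hbd1 (g t) (g u) (a u)).comp u hu
      have hmain := hd.hasDerivAt.tendsto_slope_zero_right
      have herr : Tendsto (fun ε : ℝ =>
          ((∫ w in g u..g (u + ε), f (a (u + ε)) w) - ∫ w in g u..g (u + ε), f (a u) w) / ε)
          (𝓝[>] 0) (𝓝 0) := by
        refine squeeze_zero_norm' (a := fun ε => M₁ * K * |g (u + ε) - g u|) ?_ ?_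
        · filter_upwards [self_mem_nhdsWithin] with ε hε
          rw [Real.norm_eq_abs, abs_div, abs_of_pos (a := ε) hε, div_le_iff₀ hε]
          calc _ ≤ M₁ * |a (u + ε) - a u| * |g (u + ε) - g u| :=
                abs_integral_sub_integral_le hfc hfd1 hbd1 _ _ _ _
            _ ≤ M₁ * (K * ε) * |g (u + ε) - g u| := by
                gcongr
                exact hlip u ε hε
            _ = _ := by ring
        · have : Continuous fun ε => M₁ * K * |g (u + ε) - g u| := by fun_prop
          simpa using (this.tendsto 0).mono_left nhdsWithin_le_nhds
      have hsum := hmain.add herr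
      rw [add_zero] at hsum
      refine hsum.congr fun ε => ?_
      have hi : ∀ x p q, IntervalIntegrable (f x) volume p q := fun x p q =>
        (hfc.comp (Continuous.prodMk_right x)).intervalIntegrable p q
      rw [← intervalIntegral.integral_add_adjacent_intervals (hi (a (u + ε)) (g t) (g u))
          (hi _ (g u) (g (u + ε))),
        ← intervalIntegral.integral_add_adjacent_intervals (hi (a u) (g t) (g u))
          (hi _ (g u) (g (u + ε)))]
      simp only [smul_eq_mul]
      ring
  refine ⟨_, htend, le_of_tendsto htend.abs ?_⟩
  filter_upwards [self_mem_nhdsWithin] with ε hε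
  have h := intervalIntegral.norm_integral_le_of_norm_le_const (a := s) (b := t)
    (C := M₁ * K * (Cg * (t - s) ^ lam)) (f := fun u =>
      ((∫ w in g t..g (u + ε), f (a (u + ε)) w) - ∫ w in g t..g (u + ε), f (a u) w) / ε)
    (fun u hu => by
      rw [uIoc_of_le hst.le] at hu
      exact hbound u ε hu.1.le hε)
  rw [Real.norm_eq_abs] at h
  refine h.trans (le_of_eq ?_)
  have hpos : 0 < t - s := sub_pos.2 hst
  rw [abs_of_pos hpos, Real.rpow_add hpos, Real.rpow_one]
  ring

/-- The local quadrature error of the trapezoidal rule along the path `(a, g)`. -/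
theorem abs_path_trapezoid_le
    (hfd1 : ∀ y : ℝ, Differentiable ℝ (fun x => f x y))
    (hfd2 : ∀ x : ℝ, Differentiable ℝ (f x))
    (hfd22 : ∀ x : ℝ, Differentiable ℝ (deriv (f x)))
    (hbd1 : ∀ x y : ℝ, |deriv (fun x' => f x' y) x| ≤ M₁)
    (hbd22 : ∀ x y : ℝ, |deriv (deriv (f x)) y| ≤ M₂)
    (hg : ∀ u v, |g v - g u| ≤ Cg * |v - u| ^ lam) (ha : LipschitzWith K a) {u v : ℝ}
    (huv : u < v) :
    |(f (a v) (g v) + f (a u) (g u)) / 2 * (g v - g u) - ∫ w in g u..g v, f (a u) w|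
      ≤ M₂ * Cg ^ 3 * (v - u) ^ (3 * lam) + M₁ * K * Cg * (v - u) ^ (1 + lam) := by
  have hM1 : 0 ≤ M₁ := (abs_nonneg _).trans (hbd1 0 0)
  have hM2 : 0 ≤ M₂ := (abs_nonneg _).trans (hbd22 0 0)
  have hpos : 0 < v - u := sub_pos.2 huv
  have hg' : |g v - g u| ≤ Cg * (v - u) ^ lam := by simpa [abs_of_pos hpos] using hg u v
  have ha' : |a v - a u| ≤ K * (v - u) := by
    simpa [Real.dist_eq, abs_of_pos hpos] using ha.dist_le_mul v u
  calc _ ≤ M₂ * |g v - g u| ^ 3 + M₁ * |a v - a u| * |g v - g u| :=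
        abs_integral_sub_mixed_trapezoid_le hfd1 hfd2 hfd22 hbd1 hbd22 _ _ _ _
    _ ≤ M₂ * (Cg * (v - u) ^ lam) ^ 3 + M₁ * (K * (v - u)) * (Cg * (v - u) ^ lam) := by
        gcongr
    _ = _ := by
        rw [Real.rpow_add hpos, Real.rpow_one, mul_comm 3 lam, Real.rpow_mul hpos.le,
          show (3 : ℝ) = ((3 : ℕ) : ℝ) by norm_num, Real.rpow_natCast]
        ring

/-- Existence and estimate of the symmetric integral for paths defined on all of `ℝ` that stop
moving at time `t`. -/
theorem exists_tendsto_symm_integral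
    (hlam : 1 / 3 < lam) (hCg : 0 ≤ Cg)
    (hfd1 : ∀ y : ℝ, Differentiable ℝ (fun x => f x y))
    (hfd2 : ∀ x : ℝ, Differentiable ℝ (f x))
    (hfd22 : ∀ x : ℝ, Differentiable ℝ (deriv (f x)))
    (hfc : Continuous fun p : ℝ × ℝ => f p.1 p.2)
    (hfc1 : Continuous fun p : ℝ × ℝ => deriv (fun x => f x p.2) p.1)
    (hbd1 : ∀ x y : ℝ, |deriv (fun x' => f x' y) x| ≤ M₁)
    (hbd22 : ∀ x y : ℝ, |deriv (deriv (f x)) y| ≤ M₂)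
    (hg : ∀ u v, |g v - g u| ≤ Cg * |v - u| ^ lam) (ha : LipschitzWith K a)
    (hst : s < t) (hgt : ∀ u, t ≤ u → g u = g t) :
    ∃ I : ℝ, Tendsto (fun ε : ℝ => ∫ u in s..t,
        ((f (a (u + ε)) (g (u + ε)) + f (a u) (g u)) / 2) * ((g (u + ε) - g u) / ε))
        (𝓝[>] 0) (𝓝 I) ∧
      |I - ((f (a s) (g s) + f (a t) (g t)) / 2) * (g t - g s)|
        ≤ M₂ * Cg ^ 3 * (t - s) ^ (3 * lam) + 2 * (M₁ * K * Cg) * (t - s) ^ (1 + lam) := by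
  have hlam0 : 0 < lam := by linarith
  have hgc : Continuous g := continuous_of_abs_sub_le_rpow_s3 hlam0 hg
  have hac : Continuous a := ha.continuous
  have hF : Continuous fun p : ℝ × ℝ => ∫ w in g t..p.2, f p.1 w :=
    intervalIntegral.continuous_parametric_primitive_of_continuous hfc
  have hi : ∀ x p q, IntervalIntegrable (f x) volume p q := fun x p q =>
    (hfc.comp (Continuous.prodMk_right x)).intervalIntegrable p q
  obtain ⟨J, hJ, hJle⟩ :=
    exists_tendsto_integral_left_increment hfc hfd1 hfc1 hbd1 hlam0 hCg hg ha hst hgt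
  have hH : Continuous fun u => ∫ w in g t..g u, f (a u) w := hF.comp₂ hac hgc
  have hinc := tendsto_integral_diff_quotient hH s t
  rw [intervalIntegral.integral_same, zero_sub, ← intervalIntegral.integral_symm] at hinc
  have htotal : ∀ ε, Continuous fun u : ℝ =>
      ((f (a (u + ε)) (g (u + ε)) + f (a u) (g u)) / 2) * ((g (u + ε) - g u) / ε) := fun ε => by
    have h1 : Continuous fun u => f (a u) (g u) := hfc.comp₂ hac hgc
    have h2 : Continuous fun u => f (a (u + ε)) (g (u + ε)) := h1.comp (continuous_add_const ε)
    fun_prop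
  have hinc_cont : ∀ ε, Continuous fun u : ℝ =>
      ((∫ w in g t..g (u + ε), f (a (u + ε)) w) - ∫ w in g t..g u, f (a u) w) / ε := fun ε =>
    ((hH.comp (continuous_add_const ε)).sub hH).div_const ε
  have hleft_cont : ∀ ε, Continuous fun u : ℝ =>
      ((∫ w in g t..g (u + ε), f (a (u + ε)) w) - ∫ w in g t..g (u + ε), f (a u) w) / ε :=
    fun ε => ((hH.comp (continuous_add_const ε)).sub
      (hF.comp₂ hac (by fun_prop : Continuous fun u => g (u + ε)))).div_const ε
  have hrem : Tendsto (fun ε : ℝ => (∫ u in s..t,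
        ((f (a (u + ε)) (g (u + ε)) + f (a u) (g u)) / 2) * ((g (u + ε) - g u) / ε))
      - ((∫ u in s..t,
        ((∫ w in g t..g (u + ε), f (a (u + ε)) w) - ∫ w in g t..g u, f (a u) w) / ε)
      - ∫ u in s..t, ((∫ w in g t..g (u + ε), f (a (u + ε)) w)
          - ∫ w in g t..g (u + ε), f (a u) w) / ε)) (𝓝[>] 0) (𝓝 0) := by
    refine squeeze_zero_norm' (a := fun ε : ℝ =>
      (M₂ * Cg ^ 3 * ε ^ (3 * lam - 1) + M₁ * K * Cg * ε ^ lam) * |t - s|) ?_ ?_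
    · filter_upwards [self_mem_nhdsWithin] with ε hε
      have hε : 0 < ε := hε
      rw [← intervalIntegral.integral_sub ((hinc_cont ε).intervalIntegrable _ _)
          ((hleft_cont ε).intervalIntegrable _ _),
        ← intervalIntegral.integral_sub ((htotal ε).intervalIntegrable _ _)
          (Continuous.intervalIntegrable (by exact (hinc_cont ε).sub (hleft_cont ε)) _ _)]
      refine intervalIntegral.norm_integral_le_of_norm_le_const fun u _ => ?_
      have hloc := abs_path_trapezoid_le hfd1 hfd2 hfd22 hbd1 hbd22 hg ha
        (lt_add_of_pos_right u hε)
      rw [add_sub_cancel_left, ← intervalIntegral.integral_interval_sub_left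
        (hi (a u) (g t) (g (u + ε))) (hi (a u) (g t) (g u))] at hloc
      rw [Real.norm_eq_abs]
      calc _ = |(f (a (u + ε)) (g (u + ε)) + f (a u) (g u)) / 2 * (g (u + ε) - g u)
            - ((∫ w in g t..g (u + ε), f (a u) w) - ∫ w in g t..g u, f (a u) w)| / ε := by
            rw [← abs_of_pos hε, ← abs_div, abs_of_pos hε]
            congr 1
            ring
        _ ≤ (M₂ * Cg ^ 3 * ε ^ (3 * lam) + M₁ * K * Cg * ε ^ (1 + lam)) / ε := by gcongr
        _ = _ := by
            rw [Real.rpow_sub hε, Real.rpow_add hε, Real.rpow_one]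
            field_simp
    · have hp : ∀ r : ℝ, 0 < r → Tendsto (fun ε : ℝ => ε ^ r) (𝓝[>] 0) (𝓝 0) := fun r hr => by
        have := (Real.continuous_rpow_const hr.le).tendsto 0
        rw [Real.zero_rpow hr.ne'] at this
        exact this.mono_left nhdsWithin_le_nhds
      have := (((hp (3 * lam - 1) (by linarith)).const_mul (M₂ * Cg ^ 3)).add
        ((hp lam hlam0).const_mul (M₁ * K * Cg))).mul_const |t - s|
      simpa using this
  refine ⟨(∫ w in g s..g t, f (a s) w) - J, ?_, ?_⟩
  · have h := hrem.add (hinc.sub hJ)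
    rw [zero_add] at h
    refine h.congr fun ε => ?_
    ring
  · have hloc := abs_path_trapezoid_le hfd1 hfd2 hfd22 hbd1 hbd22 hg ha hst
    calc _ = |-((f (a t) (g t) + f (a s) (g s)) / 2 * (g t - g s)
          - ∫ w in g s..g t, f (a s) w) + -J| := by ring_nf
      _ ≤ _ := abs_add_le _ _
      _ ≤ _ := by rw [abs_neg, abs_neg]; linarith

end Extended

theorem stmt3
    (lam : ℝ) (hlam1 : 1/3 < lam) (hlam2 : lam < 1)
    (Cg : ℝ) (K : NNReal)
    (f : ℝ → ℝ → ℝ)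
    (hfd1 : ∀ y : ℝ, Differentiable ℝ (fun x => f x y))
    (hfd2 : ∀ x : ℝ, Differentiable ℝ (f x))
    (hfd22 : ∀ x : ℝ, Differentiable ℝ (deriv (f x)))
    (hfc : Continuous fun p : ℝ × ℝ => f p.1 p.2)
    (hfc1 : Continuous fun p : ℝ × ℝ => deriv (fun x => f x p.2) p.1)
    (hfc2 : Continuous fun p : ℝ × ℝ => deriv (f p.1) p.2)
    (hfc22 : Continuous fun p : ℝ × ℝ => deriv (deriv (f p.1)) p.2)
    (hbd : ∃ M : ℝ, ∀ x y : ℝ, |f x y| ≤ M)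
    (hbd1 : ∃ M : ℝ, ∀ x y : ℝ, |deriv (fun x' => f x' y) x| ≤ M)
    (hbd2 : ∃ M : ℝ, ∀ x y : ℝ, |deriv (f x) y| ≤ M)
    (hbd22 : ∃ M : ℝ, ∀ x y : ℝ, |deriv (deriv (f x)) y| ≤ M) :
    ∃ C : ℝ, ∀ g a : ℝ → ℝ,
      (∀ s ∈ Set.Icc (0:ℝ) 1, ∀ t ∈ Set.Icc (0:ℝ) 1, |g t - g s| ≤ Cg * |t - s| ^ lam) →
      g 0 = 0 →
      LipschitzOnWith K a (Set.Icc 0 1) →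
      ∀ s t : ℝ, 0 ≤ s → s < t → t ≤ 1 →
        ∃ I : ℝ, HasSymmIntOn (fun u => f (a u) (g u)) g s t I ∧
          |I - ((f (a s) (g s) + f (a t) (g t)) / 2) * (g t - g s)|
            ≤ C * (t - s) ^ min (1 + lam) (3 * lam) := by
  obtain ⟨M₁, hM₁⟩ := hbd1
  obtain ⟨M₂, hM₂⟩ := hbd22
  have hM₁0 : 0 ≤ M₁ := (abs_nonneg _).trans (hM₁ 0 0)
  have hM₂0 : 0 ≤ M₂ := (abs_nonneg _).trans (hM₂ 0 0)
  refine ⟨M₂ * Cg ^ 3 + 2 * (M₁ * K * Cg), fun g a hg _ ha s t hs hst ht => ?_⟩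
  have hCg : 0 ≤ Cg := by
    have := (abs_nonneg _).trans (hg 0 (by simp) 1 (by simp))
    simpa using this
  have hclamp_mem : ∀ u, max s (min u t) ∈ Icc (0 : ℝ) 1 := fun u =>
    ⟨hs.trans (le_max_left _ _), max_le (hst.le.trans ht) ((min_le_right _ _).trans ht)⟩
  have hclamp_dist : ∀ u v, |max s (min v t) - max s (min u t)| ≤ |v - u| := fun u v =>
    (abs_max_sub_max_le_max s (min v t) s (min u t)).trans <| by
      rw [sub_self, abs_zero, max_eq_right (abs_nonneg _)]
      refine (abs_min_sub_min_le_max v t u t).trans ?_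
      rw [sub_self, abs_zero, max_eq_left (abs_nonneg _)]
  obtain ⟨I, hI, hIle⟩ := exists_tendsto_symm_integral
    (g := fun u => g (max s (min u t))) (a := fun u => a (max s (min u t)))
    hlam1 hCg hfd1 hfd2 hfd22 hfc hfc1 hM₁ hM₂
    (fun u v => (hg _ (hclamp_mem u) _ (hclamp_mem v)).trans (by
      have := hclamp_dist u v
      gcongr))
    (LipschitzWith.of_dist_le_mul fun u v =>
      (ha.dist_le_mul _ (hclamp_mem u) _ (hclamp_mem v)).trans (by
        have := hclamp_dist v u
        simp only [Real.dist_eq]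
        gcongr))
    hst (fun u hu => by simp [min_eq_right hu])
  refine ⟨I, hI.congr' ?_, ?_⟩
  · filter_upwards [self_mem_nhdsWithin] with ε hε
    have hε : 0 < ε := hε
    refine intervalIntegral.integral_congr fun u hu => ?_
    rw [uIcc_of_le hst.le] at hu
    have h1 : max s (min u t) = u := by rw [min_eq_left hu.2, max_eq_right hu.1]
    have h2 : max s (min (u + ε) t) = min (u + ε) t :=
      max_eq_right (le_min (by linarith [hu.1]) hst.le)
    simp only [h1, h2]
  · simp only [min_self, max_eq_right hst.le, min_eq_left hst.le, max_self] at hIle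
    refine hIle.trans ?_
    have hpos : 0 < t - s := sub_pos.2 hst
    have hle : t - s ≤ 1 := by linarith
    rw [add_mul]
    gcongr M₂ * Cg ^ 3 * ?_ + 2 * (M₁ * K * Cg) * ?_
    · exact Real.rpow_le_rpow_of_exponent_ge hpos hle (min_le_right _ _)
    · exact Real.rpow_le_rpow_of_exponent_ge hpos hle (min_le_left _ _)
end
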